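/- Let q ≥ 2 be an integer, let a be an integer with 0 < a < q and gcd(a,q) = 1, let a/q = [0;c₁,…,c_s], and let M > 0 be a real number. (i) If every pair of integers (x,y) with ax ≡ y (mod q), 1 ≤ x < q and 1 ≤ |y| < q satisfies x·|y| ≥ q/M, then c_j ≤ M for all j = 1,…,s. (ii) Conversely, if c_j ≤ M for all j = 1,…,s, then every pair of integers (x,y) with ax ≡ y (mod q), 1 ≤ x < q and 1 ≤ |y| < q satisfies x·|y| ≥ q/(4M). -/

import Mathlib

/-- The value of the regular continued fraction `[0; c₁, …, c_s]`. -/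
def cfVal (l : List ℕ) : ℚ :=
  l.foldr (fun c r => 1 / ((c : ℚ) + r)) 0

/-- `IsCFOf x l` means that `l = [c₁, …, c_s]` is the regular continued fraction
expansion of `x`, i.e. `x = [0; c₁, …, c_s]`, all partial quotients are positive
integers and the last one is at least `2`. -/
def IsCFOf (x : ℚ) (l : List ℕ) : Prop :=
  (∀ c ∈ l, 1 ≤ c) ∧ (∀ h : l ≠ [], 2 ≤ l.getLast h) ∧ cfVal l = x

/-!
Run the Euclidean algorithm on `(q, a)`. With `B` the denominator of a convergent and `S` the
matching remainder, `(B, ±S)` is a solution of `a x ≡ y (mod q)`, and consecutive solutions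
`(A, ∓R)`, `(B, ±S)` form a basis of the lattice of all solutions, whence `B R + A S = q`.
If `c` is the next partial quotient then `c S ≤ R < (c + 1) S`, so `c B S ≤ q ≤ (c + 2) B S`.
The left inequality gives (i). For (ii), a solution with `x` between two consecutive denominators
`B` and `A + c B` satisfies `|y| ≥ S`, hence `x |y| ≥ B S ≥ q / (c + 2)`. When the algorithm ends,
`S = 0`, so `B R = q` and `R ∣ y`; a solution with `x ≥ B` and `y ≠ 0` then has `x |y| ≥ q`.
-/

theorem cfVal_nil : cfVal [] = 0 := rfl

theorem cfVal_cons (c : ℕ) (l : List ℕ) : cfVal (c :: l) = 1 / ((c : ℚ) + cfVal l) := rfl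

theorem cfVal_nonneg (l : List ℕ) : 0 ≤ cfVal l := by
  induction l with
  | nil => exact cfVal_nil.ge
  | cons c l ih => rw [cfVal_cons]; positivity

namespace IsCFOf

variable {x : ℚ} {c : ℕ} {l : List ℕ}

theorem eq_zero (h : IsCFOf x []) : x = 0 := h.2.2.symm

theorem nonneg (h : IsCFOf x l) : 0 ≤ x := h.2.2 ▸ cfVal_nonneg l

theorem one_le_head (h : IsCFOf x (c :: l)) : 1 ≤ c := h.1 c List.mem_cons_self

theorem pos (h : IsCFOf x (c :: l)) : 0 < x := by
  have hc : (0 : ℚ) < c := by exact_mod_cast h.one_le_head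
  have hl := cfVal_nonneg l
  rw [← h.2.2, cfVal_cons]
  positivity

theorem tail (h : IsCFOf x (c :: l)) : IsCFOf (x⁻¹ - c) l := by
  obtain ⟨one_le, two_le_last, rfl⟩ := h
  refine ⟨fun d hd => one_le d (List.mem_cons_of_mem c hd), fun hl => ?_, ?_⟩
  · simpa only [List.getLast_cons hl] using two_le_last (List.cons_ne_nil c l)
  · rw [cfVal_cons, one_div, inv_inv, add_sub_cancel_left]

theorem lt_one (h : IsCFOf x l) : x < 1 := by
  match l with
  | [] => exact h.eq_zero.trans_lt one_pos
  | [c] =>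
    have hc : (2 : ℚ) ≤ c := by exact_mod_cast h.2.1 (List.cons_ne_nil c [])
    have hx : x⁻¹ = c := sub_eq_zero.1 h.tail.eq_zero
    exact (one_lt_inv₀ h.pos).1 (by linarith)
  | c :: d :: l =>
    have hc : (1 : ℚ) ≤ c := by exact_mod_cast h.one_le_head
    have htail : 0 < x⁻¹ - c := h.tail.pos
    exact (one_lt_inv₀ h.pos).1 (by linarith)

theorem one_le_of_forall_mem_le {M : ℝ} (h : IsCFOf x l) (hx : 0 < x)
    (hM : ∀ c ∈ l, (c : ℝ) ≤ M) : 1 ≤ M := by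
  cases l with
  | nil => exact absurd h.eq_zero hx.ne'
  | cons c l =>
    have hc : (1 : ℝ) ≤ c := by exact_mod_cast h.one_le_head
    exact hc.trans (hM c List.mem_cons_self)

end IsCFOf

/-- Membership of `(x, y)` in the lattice spanned by `(A, -R)` and `(B, S)`. The signs of the
second coordinates of successive basis vectors alternate in the Euclidean algorithm; here they
are normalised so that `A`, `B`, `R`, `S` can all be taken nonnegative. -/
def MemLattice (A B R S x y : ℤ) : Prop :=
  ∃ u v : ℤ, x = u * A + v * B ∧ y = v * S - u * R

namespace MemLattice

variable {A B R S x y : ℤ}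

theorem zero_one_iff_modEq {q a : ℤ} : MemLattice 0 1 q a x y ↔ a * x ≡ y [ZMOD q] := by
  rw [Int.modEq_comm, Int.modEq_iff_dvd]
  constructor
  · rintro ⟨u, v, rfl, rfl⟩
    exact ⟨u, by ring⟩
  · rintro ⟨u, hu⟩
    exact ⟨u, x, by ring, by linarith⟩

theorem shear_neg_iff (c : ℤ) :
    MemLattice B (A + c * B) S (R - c * S) x (-y) ↔ MemLattice A B R S x y := by
  constructor
  · rintro ⟨u, v, hx, hy⟩
    exact ⟨v, u + c * v, by rw [hx]; ring, by linear_combination -hy⟩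
  · rintro ⟨u, v, rfl, rfl⟩
    exact ⟨v - c * u, u, by ring, by ring⟩

theorem right : MemLattice A B R S B S := ⟨0, 1, by ring, by ring⟩

theorem le_abs_of_lt (h : MemLattice A B R S x y) (hA : 0 ≤ A) (hR : 0 ≤ R) (hS : 0 ≤ S)
    (hx : 0 < x) (hxB : x < B) : R ≤ |y| := by
  obtain ⟨u, v, rfl, rfl⟩ := h
  have hB : 0 < B := hx.trans hxB
  -- As `0 < u * A + v * B < B`, the signs of `u` and `v` rule out cancellation in `v * S - u * R`.
  rcases lt_trichotomy u 0 with hu | rfl | hu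
  · have hv : 0 < v := by by_contra! hv; nlinarith
    exact le_trans (by nlinarith) (le_abs_self _)
  · have hv : 0 < v := by by_contra! hv; nlinarith
    nlinarith
  · have hv : v ≤ 0 := by by_contra! hv; nlinarith
    exact le_trans (by nlinarith) (neg_le_abs _)

end MemLattice

/-- A state of the Euclidean algorithm for a fraction with denominator `Q`: `A` and `B` are
consecutive denominators of convergents, `R` and `S` the matching remainders, and `l` is the list
of partial quotients still to come. -/
structure EuclidState (Q A B R S : ℤ) (l : List ℕ) : Prop where
  left_nonneg : 0 ≤ A
  left_le_right : A ≤ B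
  right_pos : 0 < B
  rem_pos : 0 < R
  det_eq : B * R + A * S = Q
  isCFOf : IsCFOf ((S : ℚ) / R) l

namespace EuclidState

variable {Q A B R S x y : ℤ} {c : ℕ} {l : List ℕ}

theorem init {q a : ℕ} (hq : 0 < q) (hl : IsCFOf ((a : ℚ) / q) l) : EuclidState q 0 1 q a l where
  left_nonneg := le_rfl
  left_le_right := zero_le_one
  right_pos := one_pos
  rem_pos := by exact_mod_cast hq
  det_eq := by ring
  isCFOf := by simpa only [Int.cast_natCast] using hl

theorem rem_cast_pos (h : EuclidState Q A B R S l) : (0 : ℚ) < R := by exact_mod_cast h.rem_pos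

theorem nextRem_nonneg (h : EuclidState Q A B R S l) : 0 ≤ S := by
  have hS : (0 : ℚ) ≤ S := by
    simpa only [zero_mul] using (le_div_iff₀ h.rem_cast_pos).1 h.isCFOf.nonneg
  exact_mod_cast hS

theorem nextRem_lt_rem (h : EuclidState Q A B R S l) : S < R := by
  exact_mod_cast (div_lt_one h.rem_cast_pos).1 h.isCFOf.lt_one

theorem nextRem_eq_zero (h : EuclidState Q A B R S []) : S = 0 := by
  exact_mod_cast (div_eq_zero_iff.1 h.isCFOf.eq_zero).resolve_right h.rem_cast_pos.ne'

theorem nextRem_pos (h : EuclidState Q A B R S (c :: l)) : 0 < S := by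
  exact_mod_cast (div_pos_iff_of_pos_right h.rem_cast_pos).1 h.isCFOf.pos

theorem right_le_next (h : EuclidState Q A B R S (c :: l)) : B ≤ A + c * B := by
  have hc : (1 : ℤ) ≤ c := by exact_mod_cast h.isCFOf.one_le_head
  nlinarith [h.left_nonneg, h.right_pos]

theorem step (h : EuclidState Q A B R S (c :: l)) :
    EuclidState Q B (A + c * B) S (R - c * S) l where
  left_nonneg := h.right_pos.le
  left_le_right := h.right_le_next
  right_pos := h.right_pos.trans_le h.right_le_next
  rem_pos := h.nextRem_pos
  det_eq := by linear_combination h.det_eq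
  isCFOf := by
    have hS : (S : ℚ) ≠ 0 := by exact_mod_cast h.nextRem_pos.ne'
    have hdiv : ((S : ℚ) / R)⁻¹ - c = ((R - c * S : ℤ) : ℚ) / S := by
      push_cast
      field_simp
    exact hdiv ▸ h.isCFOf.tail

theorem right_mul_rem_le (h : EuclidState Q A B R S l) : B * R ≤ Q := by
  linarith [h.det_eq, mul_nonneg h.left_nonneg h.nextRem_nonneg]

theorem mul_right_mul_nextRem_le (h : EuclidState Q A B R S (c :: l)) : c * (B * S) ≤ Q :=
  calc c * (B * S) = B * (c * S) := by ring
    _ ≤ B * R := mul_le_mul_of_nonneg_left (sub_nonneg.1 h.step.nextRem_nonneg) h.right_pos.le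
    _ ≤ Q := h.right_mul_rem_le

theorem le_add_two_mul_right_mul_nextRem (h : EuclidState Q A B R S (c :: l)) :
    Q ≤ (c + 2) * (B * S) := by
  have hR : R ≤ (c + 1) * S := by linarith [h.step.nextRem_lt_rem]
  calc Q = B * R + A * S := h.det_eq.symm
    _ ≤ B * ((c + 1) * S) + B * S := add_le_add (mul_le_mul_of_nonneg_left hR h.right_pos.le)
        (mul_le_mul_of_nonneg_right h.left_le_right h.nextRem_pos.le)
    _ = (c + 2) * (B * S) := by ring

theorem exists_memLattice_mul_le (h : EuclidState Q A B R S l) (hc : c ∈ l) :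
    ∃ x y : ℤ, MemLattice A B R S x y ∧ 1 ≤ x ∧ x < Q ∧ 1 ≤ |y| ∧ |y| < Q ∧
      c * (x * |y|) ≤ Q := by
  induction l generalizing A B R S with
  | nil => exact absurd hc List.not_mem_nil
  | cons d l ih =>
    rcases List.mem_cons.1 hc with rfl | hc
    · have hB := h.right_pos
      have hS := h.nextRem_pos
      have hSR := h.nextRem_lt_rem
      have hQ := h.right_mul_rem_le
      refine ⟨B, S, .right, hB, by nlinarith, ?_⟩
      rw [abs_of_pos hS]
      exact ⟨hS, by nlinarith, h.mul_right_mul_nextRem_le⟩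
    · obtain ⟨x, y, hxy, hbounds⟩ := ih h.step hc
      refine ⟨x, -y, (MemLattice.shear_neg_iff d).1 (by rwa [neg_neg]), ?_⟩
      rwa [abs_neg]

theorem le_mul_abs_of_nil (h : EuclidState Q A B R S []) (hxy : MemLattice A B R S x y)
    (hx : B ≤ x) (hy : y ≠ 0) : Q ≤ x * |y| := by
  obtain rfl := h.nextRem_eq_zero
  have hRy : R ∣ y := by
    obtain ⟨u, v, -, rfl⟩ := hxy
    exact ⟨-u, by ring⟩
  calc Q = B * R := by rw [← h.det_eq, mul_zero, add_zero]
    _ ≤ x * |y| := mul_le_mul hx (Int.le_of_dvd (abs_pos.2 hy) ((dvd_abs R y).2 hRy))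
        h.rem_pos.le (h.right_pos.le.trans hx)

theorem le_mul_abs_or_exists_le_add_two_mul (h : EuclidState Q A B R S l)
    (hxy : MemLattice A B R S x y) (hx : B ≤ x) (hy : y ≠ 0) :
    Q ≤ x * |y| ∨ ∃ c ∈ l, Q ≤ (c + 2) * (x * |y|) := by
  induction l generalizing A B R S y with
  | nil => exact .inl (h.le_mul_abs_of_nil hxy hx hy)
  | cons c l ih =>
    have hxy' := (MemLattice.shear_neg_iff c).2 hxy
    rcases le_or_gt (A + c * B) x with hnext | hnext
    · have hrec := ih h.step hxy' hnext (neg_ne_zero.2 hy)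
      rw [abs_neg] at hrec
      exact hrec.imp_right fun ⟨d, hd, hQ⟩ => ⟨d, List.mem_cons_of_mem c hd, hQ⟩
    · have hx_pos : 0 < x := h.right_pos.trans_le hx
      have hSy : S ≤ |y| := abs_neg y ▸ hxy'.le_abs_of_lt h.right_pos.le h.nextRem_pos.le
        h.step.nextRem_nonneg hx_pos hnext
      refine .inr ⟨c, List.mem_cons_self, h.le_add_two_mul_right_mul_nextRem.trans ?_⟩
      gcongr
      exact h.nextRem_pos.le

theorem le_add_two_mul_of_forall_mem_le {M : ℝ} (h : EuclidState Q A B R S l)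
    (hxy : MemLattice A B R S x y) (hx : B ≤ x) (hy : y ≠ 0) (hM₀ : 0 ≤ M)
    (hM : ∀ c ∈ l, (c : ℝ) ≤ M) : (Q : ℝ) ≤ (M + 2) * (x * |(y : ℝ)|) := by
  have hx₀ : (0 : ℝ) ≤ x := by exact_mod_cast h.right_pos.le.trans hx
  have hxy₀ : 0 ≤ (x : ℝ) * |(y : ℝ)| := by positivity
  rcases h.le_mul_abs_or_exists_le_add_two_mul hxy hx hy with hQ | ⟨c, hc, hQ⟩
  · have hQ' : (Q : ℝ) ≤ x * |(y : ℝ)| := by exact_mod_cast hQ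
    exact hQ'.trans (le_mul_of_one_le_left hxy₀ (by linarith))
  · have hQ' : (Q : ℝ) ≤ (c + 2) * (x * |(y : ℝ)|) := by exact_mod_cast hQ
    exact hQ'.trans (by gcongr; exact hM c hc)

end EuclidState

theorem partial_quotients_via_hyperbola_general {q a : ℕ} (hq : 0 < q) {l : List ℕ}
    (hl : IsCFOf ((a : ℚ) / q) l) {M : ℝ} (hM : 0 < M) :
    ((∀ x y : ℤ, (a : ℤ) * x ≡ y [ZMOD (q : ℤ)] → 1 ≤ x → x < q → 1 ≤ |y| → |y| < q →
        (q : ℝ) / M ≤ (x : ℝ) * |(y : ℝ)|) → ∀ c ∈ l, (c : ℝ) ≤ M) ∧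
    ((∀ c ∈ l, (c : ℝ) ≤ M) →
      ∀ x y : ℤ, (a : ℤ) * x ≡ y [ZMOD (q : ℤ)] → 1 ≤ x → y ≠ 0 →
        (q : ℝ) / (M + 2) ≤ (x : ℝ) * |(y : ℝ)|) := by
  have hstate := EuclidState.init hq hl
  have hq' : (0 : ℝ) < q := by exact_mod_cast hq
  refine ⟨fun hyp c hc => ?_, fun hlM x y hxy hx hy => ?_⟩
  · obtain ⟨x, y, hxy, hx, hxq, hy, hyq, hcxy⟩ := hstate.exists_memLattice_mul_le hc
    have hcxy' : (c : ℝ) * (x * |(y : ℝ)|) ≤ q := by exact_mod_cast hcxy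
    have hcq : (c : ℝ) * (q / M) ≤ q :=
      (mul_le_mul_of_nonneg_left (hyp x y (MemLattice.zero_one_iff_modEq.1 hxy) hx hxq hy hyq)
        c.cast_nonneg).trans hcxy'
    rw [mul_div_assoc', div_le_iff₀ hM, mul_comm] at hcq
    exact le_of_mul_le_mul_left hcq hq'
  · rw [div_le_iff₀' (by positivity)]
    have hmem := MemLattice.zero_one_iff_modEq.2 hxy
    exact hstate.le_add_two_mul_of_forall_mem_le hmem hx hy hM.le hlM

/-- Lemma on critical denominators: partial quotients of `a/q` are controlled by
the hyperbola `x·|y| ≥ q/M` for the solutions of `ax ≡ y (mod q)`. -/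
theorem partial_quotients_via_hyperbola (q : ℕ) (hq : 2 ≤ q) (a : ℕ) (ha : 0 < a)
    (haq : a < q) (hgcd : Nat.gcd a q = 1) (l : List ℕ)
    (hl : IsCFOf ((a : ℚ) / q) l) (M : ℝ) (hM : 0 < M) :
    ((∀ x y : ℤ, (a : ℤ) * x ≡ y [ZMOD (q : ℤ)] → 1 ≤ x → x < q → 1 ≤ |y| → |y| < q →
        (q : ℝ) / M ≤ (x : ℝ) * |(y : ℝ)|) → ∀ c ∈ l, (c : ℝ) ≤ M) ∧
    ((∀ c ∈ l, (c : ℝ) ≤ M) →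
      ∀ x y : ℤ, (a : ℤ) * x ≡ y [ZMOD (q : ℤ)] → 1 ≤ x → x < q → 1 ≤ |y| → |y| < q →
        (q : ℝ) / (4 * M) ≤ (x : ℝ) * |(y : ℝ)|) := by
  have hgen := partial_quotients_via_hyperbola_general (zero_lt_two.trans_le hq) hl hM
  refine ⟨hgen.1, fun hlM x y hxy hx _ hy _ => le_trans ?_ (hgen.2 hlM x y hxy hx (abs_pos.1 hy))⟩
  have hM₁ : 1 ≤ M := hl.one_le_of_forall_mem_le (by positivity) hlM
  gcongr
  linarith
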